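/- arXiv:2306.07161 — 2 statements merged into one kernel-verified Lean document; each statement's English description precedes it below -/
import Mathlib

section
/- Let C ⊂ P^n be a rational normal curve and S ⊂ C a set of x points on C. Then: (i) if n ≥ 3, d ≥ 4 and x ≥ 1 + ⌈nd/2⌉, then S ∈ T(n,d;x); (ii) if n ≥ 4, d = 3 and x = 1 + ⌈3n/2⌉, then S ∈ T(n,3;x); (iii) if n ≥ 2, d ≥ 4 and x = 1 + ⌈nd/2⌉, then S ∈ T(n,d;x)'. -/
open MvPolynomial

noncomputable section

/-- Projective `n`-space over `k`, as the projectivization of `k^(n+1)`. -/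
abbrev ProjSpace (k : Type*) [Field k] (n : ℕ) := Projectivization k (Fin (n+1) → k)

variable (k : Type*) [Field k]

/-- Evaluation at a vector, as a linear map on polynomials. -/
def evalLM {n : ℕ} (v : Fin n → k) : MvPolynomial (Fin n) k →ₗ[k] k :=
  (MvPolynomial.aeval v).toLinearMap

/-- The submodule of polynomials vanishing together with all first partial derivatives at `v`. -/
def doubleVanishing {n : ℕ} (v : Fin n → k) : Submodule k (MvPolynomial (Fin n) k) :=
  LinearMap.ker (evalLM k v) ⊓
    ⨅ i : Fin n, LinearMap.ker ((evalLM k v).comp (MvPolynomial.pderiv i).toLinearMap)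

/-- `h^0(I_{2S}(d))`: dimension of degree-`d` forms vanishing doubly at all points of `S`. -/
def h0 (n d : ℕ) (S : Finset (ProjSpace k n)) : ℕ :=
  Module.finrank k
    ↥(homogeneousSubmodule (Fin (n+1)) k d ⊓ ⨅ p ∈ S, doubleVanishing k p.rep)

/-- `h^1(I_{2S}(d)) = h^0(I_{2S}(d)) + (n+1)#S - C(n+d,n)`. -/
def h1 (n d : ℕ) (S : Finset (ProjSpace k n)) : ℤ :=
  (h0 k n d S : ℤ) + (n+1) * S.card - (n+d).choose n

/-- `S` spans `P^n`: it is contained in no hyperplane. -/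
def Spans (n : ℕ) (S : Finset (ProjSpace k n)) : Prop :=
  Submodule.span k (Projectivization.rep '' (S : Set (ProjSpace k n))) = ⊤

/-- The Terracini locus `T(n,d;x)`. -/
def Terracini (n d x : ℕ) : Set (Finset (ProjSpace k n)) :=
  {S | S.card = x ∧ Spans k n S ∧ 0 < h0 k n d S ∧ 0 < h1 k n d S}

/-- The minimally Terracini locus `T(n,d;x)'`. -/
def minTerracini (n d x : ℕ) : Set (Finset (ProjSpace k n)) :=
  {S | S ∈ Terracini k n d x ∧ ∀ A : Finset (ProjSpace k n), A ⊂ S → h1 k n d A = 0}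

end
/-- The `i`-th coordinate `s^(n-i) t^i` of the standard rational normal curve of degree `n`. -/
def stdRNCvec (k : Type*) [Field k] (n : ℕ) (s t : k) : Fin (n+1) → k :=
  fun i => s ^ (n - (i : ℕ)) * t ^ (i : ℕ)

/-- The standard rational normal curve in `P^n`: the image of
`[s:t] ↦ [s^n : s^(n-1)t : ⋯ : t^n]`. -/
def stdRNC (k : Type*) [Field k] (n : ℕ) : Set (ProjSpace k n) :=
  {p | ∃ s t : k, (s ≠ 0 ∨ t ≠ 0) ∧
    Projectivization.submodule p = Submodule.span k {stdRNCvec k n s t}}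

/-- A rational normal curve in `P^n`: a curve projectively equivalent to the standard one. -/
def IsRNC (k : Type*) [Field k] (n : ℕ) (C : Set (ProjSpace k n)) : Prop :=
  ∃ g : (Fin (n+1) → k) ≃ₗ[k] (Fin (n+1) → k),
    C = {p | ∃ s t : k, (s ≠ 0 ∨ t ≠ 0) ∧
      Projectivization.submodule p = Submodule.span k {g (stdRNCvec k n s t)}}

/-!
In characteristic zero, Euler's formula turns `h¹(I_{2S}(d)) = 0` into surjectivity of the map that
sends a form of degree `d` to its gradients at the points of `S`. Parametrizing the curve pulls
forms of degree `d` back to binary forms of degree `nd`, and surjectivity is inherited by the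
pullback; since binary forms of degree `nd` make up a space of dimension `nd + 1`, it fails as soon
as `2x > nd + 1`.

For `h⁰ > 0`, the Hankel matrix of the coordinates has rank one along the curve, so the square of a
`2 × 2` minor (for `d ≥ 4`) and a `3 × 3` minor (for `d = 3`) are singular there.

For minimality, let `x' ≤ (nd + 1) / 2` points lie in linearly general position, as they do on the
curve by Vandermonde. Products of hyperplanes, each passing through at most `n` of the points, give
forms that are singular at all points but one and have a prescribed gradient at the last one.
-/

namespace Terracini

open Finset

section Gradient

variable {R σ τ : Type*} [CommRing R]

/-- The gradient of the polynomial `f` at the vector `v`. -/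
noncomputable def gradient (f : MvPolynomial σ R) (v : σ → R) : σ → R :=
  fun i => eval v (pderiv i f)

theorem gradient_mul (f g : MvPolynomial σ R) (v : σ → R) :
    gradient (f * g) v = eval v g • gradient f v + eval v f • gradient g v := by
  ext i
  simp only [gradient, pderiv_mul, map_add, map_mul, Pi.add_apply, Pi.smul_apply, smul_eq_mul]
  ring

theorem gradient_add (f g : MvPolynomial σ R) (v : σ → R) :
    gradient (f + g) v = gradient f v + gradient g v := by
  ext i
  simp [gradient]

theorem gradient_eq_zero_of_mem_ker_sq {f : MvPolynomial σ R} {v : σ → R}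
    (hf : f ∈ RingHom.ker (eval v) ^ 2) : gradient f v = 0 := by
  rw [sq] at hf
  induction hf using Submodule.mul_induction_on' with
  | mem_mul_mem g hg h hh =>
    rw [gradient_mul, RingHom.mem_ker.mp hg, RingHom.mem_ker.mp hh, zero_smul, zero_smul, add_zero]
  | add g _ h _ hg hh => rw [gradient_add, hg, hh, add_zero]

theorem eval_smul_of_isHomogeneous {f : MvPolynomial σ R} {d : ℕ} (hf : f.IsHomogeneous d)
    (c : R) (v : σ → R) : eval (c • v) f = c ^ d * eval v f := by
  rw [eval_eq, eval_eq, mul_sum]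
  refine sum_congr rfl fun m hm => ?_
  simp only [Pi.smul_apply, smul_eq_mul, mul_pow, prod_mul_distrib, prod_pow_eq_pow_sum,
    hf.degree_eq_sum_deg_support hm]
  ring

theorem gradient_smul_of_isHomogeneous {f : MvPolynomial σ R} {d : ℕ} (hf : f.IsHomogeneous d)
    (c : R) (v : σ → R) : gradient f (c • v) = c ^ (d - 1) • gradient f v := by
  ext i
  exact eval_smul_of_isHomogeneous hf.pderiv c v

variable [Fintype σ]

theorem dotProduct_gradient_self {f : MvPolynomial σ R} {d : ℕ} (hf : f.IsHomogeneous d)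
    (v : σ → R) : v ⬝ᵥ gradient f v = d * eval v f := by
  simpa [dotProduct, gradient] using congrArg (eval v) hf.sum_X_mul_pderiv

theorem pderiv_bind₁ (γ : σ → MvPolynomial τ R) (f : MvPolynomial σ R) (a : τ) :
    pderiv a (bind₁ γ f) = ∑ j, pderiv a (γ j) * bind₁ γ (pderiv j f) := by
  classical
  induction f using MvPolynomial.induction_on with
  | C c => simp
  | add f g hf hg => simp [hf, hg, mul_add, sum_add_distrib]
  | mul_X f i hf =>
    simp only [map_mul, bind₁_X_right, pderiv_mul, hf, sum_mul, map_add, mul_add,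
      sum_add_distrib, pderiv_X, Pi.single_apply, mul_assoc]
    simp [mul_comm]

theorem dotProduct_gradient_bind₁ [Fintype τ] (γ : σ → MvPolynomial τ R) (f : MvPolynomial σ R)
    (u x : τ → R) :
    x ⬝ᵥ gradient (bind₁ γ f) u =
      (fun j => x ⬝ᵥ gradient (γ j) u) ⬝ᵥ gradient f (fun j => eval u (γ j)) := by
  have eval_bind₁ (g : MvPolynomial σ R) : eval u (bind₁ γ g) = eval (fun j => eval u (γ j)) g := by
    simpa [aeval_eq_eval] using aeval_bind₁ u γ g
  simp only [dotProduct, gradient, pderiv_bind₁, map_sum, map_mul, eval_bind₁, mul_sum, sum_mul,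
    mul_assoc]
  exact sum_comm

/-- The degree-one form attached to a linear functional. -/
noncomputable def linearForm [DecidableEq σ] (φ : Module.Dual R (σ → R)) : MvPolynomial σ R :=
  ∑ i, C (φ (Pi.single i 1)) * X i

variable [DecidableEq σ] (φ : Module.Dual R (σ → R))

theorem isHomogeneous_linearForm : (linearForm φ).IsHomogeneous 1 :=
  IsHomogeneous.sum _ _ _ fun _ _ => isHomogeneous_C_mul_X _ _

theorem dotProduct_gradient_linearForm (v w : σ → R) : w ⬝ᵥ gradient (linearForm φ) v = φ w := by
  conv_rhs => rw [pi_eq_sum_univ' w]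
  simp [linearForm, gradient, dotProduct, pderiv_X, Pi.single_apply]

theorem eval_linearForm (v : σ → R) : eval v (linearForm φ) = φ v := by
  simpa [dotProduct_gradient_linearForm] using
    (dotProduct_gradient_self (isHomogeneous_linearForm φ) v).symm

end Gradient

section GradientMap

variable {k σ τ ι κ : Type*} [Field k]

/-- The map recording the gradients of a form of degree `d` at the vectors `v p`. In characteristic
zero it is onto if and only if the double points supported at the `v p` impose independent
conditions on forms of degree `d`. -/
noncomputable def gradientMap (d : ℕ) (v : ι → σ → k) :
    homogeneousSubmodule σ k d →ₗ[k] (ι × σ → k) :=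
  LinearMap.pi fun q =>
    ((aeval (v q.1)).toLinearMap ∘ₗ (pderiv q.2).toLinearMap) ∘ₗ Submodule.subtype _

theorem gradientMap_apply {d : ℕ} (v : ι → σ → k) (f : homogeneousSubmodule σ k d) (q : ι × σ) :
    gradientMap d v f q = gradient f.1 (v q.1) q.2 := by
  simp [gradientMap, gradient, aeval_eq_eval]

theorem surjective_gradientMap_comp {d : ℕ} {v : ι → σ → k} {e : κ → ι} (he : e.Injective)
    (h : Function.Surjective (gradientMap d v)) : Function.Surjective (gradientMap d (v ∘ e)) :=
  (LinearMap.funLeft_surjective_of_injective k k (Prod.map e id)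
    (he.prodMap Function.injective_id)).comp h

theorem surjective_gradientMap_iff [Fintype σ] [Fintype ι] {d : ℕ} {v : ι → σ → k} :
    Function.Surjective (gradientMap d v) ↔ ∀ w : ι → σ → k,
      (∀ f : MvPolynomial σ k, f.IsHomogeneous d → ∑ p, w p ⬝ᵥ gradient f (v p) = 0) → w = 0 := by
  classical
  rw [← LinearMap.dualMap_injective_iff, injective_iff_map_eq_zero,
    ← (dotProductEquiv k (ι × σ)).forall_congr_right, ← (Equiv.curry ι σ k).symm.forall_congr_right]
  refine forall_congr' fun w => imp_congr ?_ ?_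
  · simp [LinearMap.ext_iff, dotProduct, gradientMap_apply, Fintype.sum_prod_type]
  · exact (map_eq_zero_iff _ (dotProductEquiv k _).injective).trans
      (Equiv.curry ι σ k).symm_apply_eq

theorem surjective_gradientMap_of_smul [Finite σ] [Finite ι] {d : ℕ} {v : ι → σ → k} {c : ι → k}
    (hc : ∀ p, c p ≠ 0) (h : Function.Surjective (gradientMap d fun p => c p • v p)) :
    Function.Surjective (gradientMap d v) := by
  have := Fintype.ofFinite σ
  have := Fintype.ofFinite ι
  rw [surjective_gradientMap_iff] at h ⊢
  intro w hw
  have rescaled := h (fun p => (c p ^ (d - 1))⁻¹ • w p) fun f hf => by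
    simpa [gradient_smul_of_isHomogeneous hf, hc] using hw f hf
  ext p : 1
  simpa [hc] using congrFun rescaled p

theorem surjective_gradientMap_of_bind₁ [Finite σ] [Fintype τ] [Finite ι] {d e : ℕ}
    {γ : σ → MvPolynomial τ k} (hγ : ∀ j, (γ j).IsHomogeneous e) {u : ι → τ → k}
    (immersive : ∀ p x, (∀ j, x ⬝ᵥ gradient (γ j) (u p) = 0) → x = 0)
    (h : Function.Surjective (gradientMap d fun p j => eval (u p) (γ j))) :
    Function.Surjective (gradientMap (e * d) u) := by
  have := Fintype.ofFinite σ
  have := Fintype.ofFinite ι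
  rw [surjective_gradientMap_iff] at h ⊢
  intro x hx
  have pushforward := h (fun p j => x p ⬝ᵥ gradient (γ j) (u p)) fun f hf => by
    simpa only [dotProduct_gradient_bind₁] using hx (bind₁ γ f) (hf.aeval γ hγ)
  ext p : 1
  exact immersive p _ fun j => congrFun (congrFun pushforward p) j

instance finite_homogeneousSubmodule [Finite σ] (d : ℕ) :
    Module.Finite k (homogeneousSubmodule σ k d) :=
  Module.Finite.iff_fg.mpr (homogeneousSubmodule_fg σ k d)

variable [Fintype σ]

theorem finrank_homogeneousSubmodule (d : ℕ) :
    Module.finrank k (homogeneousSubmodule σ k d) = (Fintype.card σ).multichoose d := by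
  classical
  have exponents : {e : σ →₀ ℕ | e.degree = d} = ((univ : Finset σ).finsuppAntidiag d : Set _) := by
    ext e
    simp [mem_finsuppAntidiag, Finsupp.degree_eq_sum]
  rw [homogeneousSubmodule_eq_finsupp_supported]
  calc
    _ = Nat.card {e : σ →₀ ℕ | e.degree = d} :=
      Module.finrank_eq_nat_card_basis (basisRestrictSupport k _)
    _ = (Fintype.card σ).multichoose d := by
      rw [exponents, Nat.card_coe_set_eq, Set.ncard_coe_finset,
        card_finsuppAntidiag_nat_eq_multichoose, card_univ]

theorem card_mul_card_le_of_surjective_gradientMap [Fintype ι] {d : ℕ} {v : ι → σ → k}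
    (h : Function.Surjective (gradientMap d v)) :
    Fintype.card ι * Fintype.card σ ≤ (Fintype.card σ).multichoose d := by
  simpa [finrank_homogeneousSubmodule] using LinearMap.finrank_le_finrank_of_surjective h

end GradientMap

section DoublePoints

variable {k : Type*} [Field k] {n d : ℕ}

theorem mem_doubleVanishing_iff {v : Fin n → k} {f : MvPolynomial (Fin n) k} :
    f ∈ doubleVanishing k v ↔ eval v f = 0 ∧ gradient f v = 0 := by
  simp [doubleVanishing, evalLM, aeval_eq_eval, gradient, funext_iff]

theorem mem_doubleVanishing_of_mem_ker_sq {v : Fin n → k} {f : MvPolynomial (Fin n) k}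
    (hf : f ∈ RingHom.ker (eval v) ^ 2) : f ∈ doubleVanishing k v :=
  mem_doubleVanishing_iff.mpr
    ⟨RingHom.mem_ker.mp (Ideal.pow_le_self two_ne_zero hf), gradient_eq_zero_of_mem_ker_sq hf⟩

theorem mem_doubleVanishing_iff_of_isHomogeneous [CharZero k] (hd : d ≠ 0) {v : Fin n → k}
    {f : MvPolynomial (Fin n) k} (hf : f.IsHomogeneous d) :
    f ∈ doubleVanishing k v ↔ gradient f v = 0 := by
  refine mem_doubleVanishing_iff.trans (and_iff_right_of_imp fun h => ?_)
  simpa [h, hd] using (dotProduct_gradient_self hf v).symm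

theorem h0_pos {S : Finset (ProjSpace k n)} {f : MvPolynomial (Fin (n + 1)) k}
    (hf : f.IsHomogeneous d) (hf₀ : f ≠ 0) (h : ∀ p ∈ S, f ∈ doubleVanishing k p.rep) :
    0 < h0 k n d S := by
  have := Submodule.finiteDimensional_inf_left (homogeneousSubmodule (Fin (n + 1)) k d)
    (⨅ p ∈ S, doubleVanishing k p.rep)
  refine Module.finrank_pos_iff_exists_ne_zero.mpr ⟨⟨f, hf, ?_⟩, ?_⟩
  · simpa [Submodule.mem_iInf] using h
  · simpa [Subtype.ext_iff] using hf₀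

/-- The representatives of the points of `S`, as a family of vectors. -/
noncomputable def reps (S : Finset (ProjSpace k n)) (p : S) : Fin (n + 1) → k :=
  p.1.rep

variable [CharZero k] (S : Finset (ProjSpace k n))

theorem h0_eq_finrank_ker_gradientMap (hd : d ≠ 0) :
    h0 k n d S = Module.finrank k (LinearMap.ker (gradientMap d (reps S))) := by
  have forms_eq_map_ker :
      homogeneousSubmodule (Fin (n + 1)) k d ⊓ ⨅ p ∈ S, doubleVanishing k p.rep =
        (LinearMap.ker (gradientMap d (reps S))).map (Submodule.subtype _) := by
    ext f
    simp only [Submodule.mem_inf, Submodule.mem_iInf, Submodule.mem_map, LinearMap.mem_ker,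
      Submodule.subtype_apply, Subtype.exists, exists_and_right, exists_eq_right,
      mem_homogeneousSubmodule, ← exists_prop (a := f.IsHomogeneous d)]
    refine exists_congr fun hf => ?_
    simp [mem_doubleVanishing_iff_of_isHomogeneous hd hf, funext_iff, gradientMap_apply, reps]
  rw [h0, forms_eq_map_ker, Submodule.finrank_map_subtype_eq]

theorem h1_add_finrank_range_gradientMap (hd : d ≠ 0) :
    h1 k n d S + Module.finrank k (LinearMap.range (gradientMap d (reps S))) =
      Module.finrank k (S × Fin (n + 1) → k) := by
  have rank_nullity := LinearMap.finrank_range_add_finrank_ker (gradientMap d (reps S))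
  rw [← h0_eq_finrank_ker_gradientMap S hd, finrank_homogeneousSubmodule, Fintype.card_fin,
    Nat.multichoose_eq, Nat.add_right_comm, Nat.add_sub_cancel, ← Nat.choose_symm_add]
    at rank_nullity
  rw [h1, ← rank_nullity, Module.finrank_fintype_fun_eq_card, Fintype.card_prod, Fintype.card_coe,
    Fintype.card_fin]
  push_cast
  ring

theorem h1_eq_zero_iff (hd : d ≠ 0) :
    h1 k n d S = 0 ↔ Function.Surjective (gradientMap d (reps S)) := by
  have rank := h1_add_finrank_range_gradientMap S hd
  rw [← LinearMap.range_eq_top]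
  refine ⟨fun h => Submodule.eq_top_of_finrank_eq ?_, fun h => ?_⟩
  · omega
  · rw [h, finrank_top] at rank
    omega

theorem h1_pos_iff (hd : d ≠ 0) :
    0 < h1 k n d S ↔ ¬ Function.Surjective (gradientMap d (reps S)) := by
  have rank := h1_add_finrank_range_gradientMap S hd
  have := Submodule.finrank_le (LinearMap.range (gradientMap d (reps S)))
  rw [← h1_eq_zero_iff S hd]
  omega

variable {S} in
theorem h1_eq_zero_of_subset (hd : d ≠ 0) {A : Finset (ProjSpace k n)} (hA : A ⊆ S)
    (hS : h1 k n d S = 0) : h1 k n d A = 0 := by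
  rw [h1_eq_zero_iff _ hd] at hS ⊢
  let inclusion : A ↪ S := Subtype.impEmbedding _ _ fun _ hp => hA hp
  have reps_comp : reps S ∘ inclusion = reps A := rfl
  rw [← reps_comp]
  exact surjective_gradientMap_comp inclusion.injective hS

end DoublePoints

section GeneralPosition

variable {k V ι : Type*} [Field k] [AddCommGroup V] [Module k V]

variable (k) in
/-- Linearly general position: any `dim V` of the vectors are linearly independent. -/
def InGeneralPosition (v : ι → V) : Prop :=
  ∀ T : Finset ι, #T = Module.finrank k V → LinearIndepOn k v T

namespace InGeneralPosition

variable [Fintype ι] {v : ι → V} (hv : InGeneralPosition k v)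
  (hι : Module.finrank k V ≤ Fintype.card ι)
include hv hι

theorem linearIndepOn {T : Finset ι} (hT : #T ≤ Module.finrank k V) : LinearIndepOn k v T := by
  obtain ⟨U, hTU, hU⟩ := exists_superset_card_eq hT hι
  exact (hv U hU).mono hTU

theorem exists_dual {T : Finset ι} (hT : #T < Module.finrank k V) {p : ι} (hp : p ∉ T) :
    ∃ φ : Module.Dual k V, φ (v p) ≠ 0 ∧ ∀ q ∈ T, φ (v q) = 0 := by
  classical
  have notMem_span : v p ∉ Submodule.span k (v '' T) := by
    refine LinearIndepOn.notMem_span_of_insert ?_ hp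
    rw [← coe_insert]
    exact hv.linearIndepOn hι ((card_insert_le _ _).trans hT)
  obtain ⟨φ, hφp, hφT⟩ := Submodule.exists_le_ker_of_notMem notMem_span
  exact ⟨φ, hφp, fun q hq => hφT (Submodule.subset_span (Set.mem_image_of_mem v hq))⟩

theorem span_range [Module.Finite k V] : Submodule.span k (Set.range v) = ⊤ := by
  obtain ⟨T, -, hT⟩ := exists_subset_card_eq (s := (univ : Finset ι)) hι
  rw [eq_top_iff, ← (hv T hT).linearIndependent.span_eq_top_of_card_eq_finrank' (by simpa using hT)]
  exact Submodule.span_mono (Set.range_comp_subset_range _ v)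

theorem exists_eq_smul [Module.Finite k V] {p : ι} {x : V}
    (h : ∀ T : Finset ι, p ∈ T → #T + 1 = Module.finrank k V →
      ∀ φ : Module.Dual k V, (∀ q ∈ T, φ (v q) = 0) → φ x = 0) :
    ∃ c : k, x = c • v p := by
  classical
  by_cases finrank_eq : Module.finrank k V = 0
  · have := Module.finrank_zero_iff.mp finrank_eq
    exact ⟨0, Subsingleton.elim _ _⟩
  obtain ⟨T, hpT, hT⟩ := exists_superset_card_eq (s := {p})
    (by simpa using Nat.one_le_iff_ne_zero.mpr finrank_eq) hι
  rw [singleton_subset_iff] at hpT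
  let b := basisOfLinearIndependentOfCardEqFinrank' (fun q : T => v q) (hv T hT).linearIndependent
    (by simpa using hT)
  have b_apply (q : T) : b q = v q := by simp [b]
  have repr_eq_zero (r : T) (hr : r ≠ ⟨p, hpT⟩) : b.repr x r = 0 := by
    refine h (T.erase r) (by grind) (by rw [card_erase_add_one r.2, hT]) (b.coord r) fun q hq => ?_
    rw [mem_erase] at hq
    rw [← b_apply ⟨q, hq.2⟩, b.coord_apply, b.repr_self_apply, if_neg]
    exact fun h => hq.1 (congrArg Subtype.val h)
  refine ⟨b.repr x ⟨p, hpT⟩, ?_⟩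
  conv_lhs => rw [← b.sum_repr x]
  rw [Fintype.sum_eq_single _ fun r hr => by rw [repr_eq_zero r hr, zero_smul], b_apply]

end InGeneralPosition

end GeneralPosition

section HyperplaneProducts

variable {ι : Type*} [Fintype ι]

theorem exists_card_le_and_mem_of_eq_succ {n m : ℕ} {μ : ι → ℕ}
    (sum_le : ∑ q, μ q ≤ n * (m + 1)) :
    ∃ T : Finset ι, #T ≤ n ∧ (∀ q, μ q = m + 1 → q ∈ T) ∧ (∀ q ∈ T, μ q ≠ 0) ∧
      (#T = n ∨ ∀ q, μ q ≠ 0 → q ∈ T) := by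
  classical
  have top_subset_support : univ.filter (μ · = m + 1) ⊆ univ.filter (μ · ≠ 0) := by grind
  have card_top_le : #{q | μ q = m + 1} ≤ n := by
    refine Nat.le_of_mul_le_mul_right (c := m + 1) ?_ m.succ_pos
    calc
      _ ≤ ∑ q with μ q = m + 1, μ q :=
        card_nsmul_le_sum _ _ _ fun q hq => (mem_filter.mp hq).2.ge
      _ ≤ _ := (sum_le_sum_of_subset (subset_univ _)).trans sum_le
  rcases le_total #{q | μ q ≠ 0} n with support_le | le_support
  · exact ⟨_, support_le, by grind, by simp, .inr (by simp)⟩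
  · obtain ⟨T, top_subset, subset_support, card_eq⟩ :=
      exists_subsuperset_card_eq top_subset_support card_top_le le_support
    exact ⟨T, card_eq.le, by grind, by grind, .inl card_eq⟩

theorem exists_eq_add_ite_mem [DecidableEq ι] {n m : ℕ} {μ : ι → ℕ} (le_succ : ∀ q, μ q ≤ m + 1)
    (sum_le : ∑ q, μ q ≤ n * (m + 1)) :
    ∃ (T : Finset ι) (ν : ι → ℕ), #T ≤ n ∧ (∀ q, ν q ≤ m) ∧ ∑ q, ν q ≤ n * m ∧
      ∀ q, μ q = ν q + if q ∈ T then 1 else 0 := by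
  obtain ⟨T, card_le, mem_of_eq_succ, ne_zero_of_mem, hT⟩ :=
    exists_card_le_and_mem_of_eq_succ sum_le
  let ν (q : ι) : ℕ := μ q - if q ∈ T then 1 else 0
  have decomposition (q : ι) : μ q = ν q + if q ∈ T then 1 else 0 := by grind
  have ν_le (q : ι) : ν q ≤ m := by grind
  refine ⟨T, ν, card_le, ν_le, ?_, decomposition⟩
  rcases hT with card_eq | support_subset
  · have sum_eq : ∑ q, μ q = ∑ q, ν q + n := by
      simp [sum_congr rfl fun q _ => decomposition q, sum_add_distrib, card_eq]
    linarith
  · calc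
      ∑ q, ν q = ∑ q ∈ T, ν q := (sum_subset (subset_univ T) (by grind)).symm
      _ ≤ #T * m := sum_le_card_nsmul _ _ _ fun q _ => ν_le q
      _ ≤ n * m := Nat.mul_le_mul_right m card_le

variable {k : Type*} [Field k] {n : ℕ} {v : ι → Fin (n + 1) → k}

namespace InGeneralPosition

theorem exists_isHomogeneous_mem_ker_pow (hv : InGeneralPosition k v)
    (hι : n + 1 ≤ Fintype.card ι) {p : ι} {m : ℕ} {μ : ι → ℕ} (hp : μ p = 0)
    (le : ∀ q, μ q ≤ m) (sum_le : ∑ q, μ q ≤ n * m) :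
    ∃ f : MvPolynomial (Fin (n + 1)) k, f.IsHomogeneous m ∧ eval (v p) f ≠ 0 ∧
      ∀ q, f ∈ RingHom.ker (eval (v q)) ^ μ q := by
  classical
  induction m generalizing μ with
  | zero =>
    exact ⟨1, isHomogeneous_one _ _, by simp, fun q => by simp [Nat.le_zero.mp (le q)]⟩
  | succ m ih =>
    -- Split off a hyperplane through at most `n` points, among them all of multiplicity `m + 1`.
    obtain ⟨T, ν, card_le, ν_le, sum_ν_le, decomposition⟩ := exists_eq_add_ite_mem le sum_le
    have hνp : ν p = 0 := by grind
    have hpT : p ∉ T := by grind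
    obtain ⟨f, hf, hfp, hfν⟩ := ih hνp ν_le sum_ν_le
    obtain ⟨φ, hφp, hφT⟩ := hv.exists_dual (T := T) (by simpa using hι)
      (by simpa using Nat.lt_succ_of_le card_le) hpT
    refine ⟨f * linearForm φ, hf.mul (isHomogeneous_linearForm φ), ?_, fun q => ?_⟩
    · simpa [eval_linearForm] using ⟨hfp, hφp⟩
    · rw [decomposition, pow_add]
      refine Ideal.mul_mem_mul (hfν q) ?_
      split_ifs with hq
      · simpa [RingHom.mem_ker, eval_linearForm] using hφT q hq
      · simp

theorem exists_isHomogeneous_mem_ker_sq (hv : InGeneralPosition k v)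
    (hι : n + 1 ≤ Fintype.card ι) {d : ℕ} (hd : 2 ≤ d) (card_le : 2 * Fintype.card ι ≤ n * d + 2)
    (p : ι) :
    ∃ f : MvPolynomial (Fin (n + 1)) k, f.IsHomogeneous d ∧ eval (v p) f ≠ 0 ∧
      ∀ q ≠ p, f ∈ RingHom.ker (eval (v q)) ^ 2 := by
  classical
  let μ (q : ι) : ℕ := if q = p then 0 else 2
  have sum_μ : ∑ q, μ q + 2 = 2 * Fintype.card ι := by
    calc
      ∑ q, μ q + 2 = ∑ q, (μ q + if q = p then 2 else 0) := by simp [sum_add_distrib]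
      _ = ∑ _q : ι, 2 := sum_congr rfl fun q _ => by grind
      _ = 2 * Fintype.card ι := by simp [mul_comm]
  obtain ⟨f, hf, hfp, hfμ⟩ := hv.exists_isHomogeneous_mem_ker_pow hι (p := p) (m := d) (μ := μ)
    (by simp [μ]) (by grind) (by omega)
  exact ⟨f, hf, hfp, fun q hq => by simpa [μ, hq] using hfμ q⟩

theorem exists_isHomogeneous_dotProduct_gradient_eq_mul (hv : InGeneralPosition k v)
    (hι : n + 1 ≤ Fintype.card ι) {d : ℕ} (hd : 3 ≤ d)
    (card_le : 2 * Fintype.card ι ≤ n * d + 1) {p : ι} {T : Finset ι} (hT : #T = n) (hp : p ∈ T)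
    {φ : Module.Dual k (Fin (n + 1) → k)} (hφ : ∀ q ∈ T, φ (v q) = 0) :
    ∃ f : MvPolynomial (Fin (n + 1)) k, f.IsHomogeneous d ∧
      (∀ q ≠ p, f ∈ RingHom.ker (eval (v q)) ^ 2) ∧
      ∃ c ≠ 0, ∀ w, w ⬝ᵥ gradient f (v p) = c * φ w := by
  classical
  obtain ⟨m, rfl⟩ : ∃ m, d = m + 1 := ⟨d - 1, by omega⟩
  let μ (q : ι) : ℕ := 2 - (if q ∈ T then 1 else 0) - if q = p then 1 else 0
  have sum_μ : ∑ q, μ q + n + 1 = 2 * Fintype.card ι := by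
    calc
      ∑ q, μ q + n + 1
          = ∑ q, (μ q + (if q ∈ T then 1 else 0) + if q = p then 1 else 0) := by
        simp [sum_add_distrib, hT]
      _ = ∑ _q : ι, 2 := sum_congr rfl fun q _ => by grind
      _ = 2 * Fintype.card ι := by simp [mul_comm]
  obtain ⟨h, hh, hhp, hhμ⟩ := hv.exists_isHomogeneous_mem_ker_pow (p := p) (m := m) (μ := μ)
    hι (by simp [μ, hp]) (by grind) (by linarith)
  refine ⟨h * linearForm φ, hh.mul (isHomogeneous_linearForm φ), fun q hq => ?_,
    eval (v p) h, hhp, fun w => ?_⟩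
  · by_cases hqT : q ∈ T
    · have hhq : h ∈ RingHom.ker (eval (v q)) := by simpa [μ, hq, hqT] using hhμ q
      rw [sq]
      exact Ideal.mul_mem_mul hhq (by simpa [RingHom.mem_ker, eval_linearForm] using hφ q hqT)
    · exact Ideal.mul_mem_right _ _ (by simpa [μ, hq, hqT] using hhμ q)
  · simp [gradient_mul, eval_linearForm, hφ p hp, dotProduct_gradient_linearForm]

theorem surjective_gradientMap [CharZero k] (hv : InGeneralPosition k v)
    (hι : n + 1 ≤ Fintype.card ι) {d : ℕ} (hd : 3 ≤ d)
    (card_le : 2 * Fintype.card ι ≤ n * d + 1) :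
    Function.Surjective (gradientMap d v) := by
  classical
  rw [surjective_gradientMap_iff]
  intro w hw
  ext p : 1
  have annihilates {f : MvPolynomial (Fin (n + 1)) k} (hf : f.IsHomogeneous d)
      (hfq : ∀ q ≠ p, f ∈ RingHom.ker (eval (v q)) ^ 2) : w p ⬝ᵥ gradient f (v p) = 0 := by
    rw [← hw f hf, Fintype.sum_eq_single p]
    intro q hq
    rw [gradient_eq_zero_of_mem_ker_sq (hfq q hq), dotProduct_zero]
  obtain ⟨c, w_eq_smul⟩ : ∃ c : k, w p = c • v p := by
    refine hv.exists_eq_smul (by simpa using hι) fun T hpT hT φ hφ => ?_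
    obtain ⟨f, hf, hfq, a, ha, hfp⟩ := hv.exists_isHomogeneous_dotProduct_gradient_eq_mul hι hd
      card_le (by simpa using hT) hpT hφ
    simpa [ha, hfp] using annihilates hf hfq
  obtain ⟨f, hf, hfp, hfq⟩ := hv.exists_isHomogeneous_mem_ker_sq hι (d := d) (by omega) (by omega) p
  have euler := annihilates hf hfq
  rw [w_eq_smul, smul_dotProduct, dotProduct_gradient_self hf] at euler
  have c_eq_zero : c = 0 := by simpa [hfp, show d ≠ 0 by omega] using euler
  rw [w_eq_smul, c_eq_zero, zero_smul, Pi.zero_apply]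

end InGeneralPosition

end HyperplaneProducts

section RationalNormalCurve

variable {k : Type*} [Field k] {n : ℕ}

theorem stdRNCvec_mul_mul (a s t : k) :
    stdRNCvec k n (a * s) (a * t) = a ^ n • stdRNCvec k n s t := by
  ext i
  have : a ^ n = a ^ (n - (i : ℕ)) * a ^ (i : ℕ) := by rw [← pow_add, Nat.sub_add_cancel i.is_le]
  simp only [stdRNCvec, Pi.smul_apply, smul_eq_mul, this]
  ring

theorem linearIndependent_stdRNCvec {s t : Fin (n + 1) → k}
    (h : ∀ i j, i < j → s i * t j - t i * s j ≠ 0) :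
    LinearIndependent k fun i => stdRNCvec k n (s i) (t i) := by
  have rows_eq : (fun i => stdRNCvec k n (s i) (t i)) = (Matrix.projVandermonde t s).row := by
    ext i j
    simp [stdRNCvec, Matrix.projVandermonde_apply, Fin.rev, mul_comm]
  rw [rows_eq]
  refine Matrix.linearIndependent_rows_of_det_ne_zero (A := Matrix.projVandermonde t s) ?_
  rw [Matrix.det_projVandermonde]
  refine prod_ne_zero_iff.mpr fun i _ => prod_ne_zero_iff.mpr fun j hj => ?_
  convert h i j (mem_Ioi.mp hj) using 1
  ring

/-- The affine cone, without its vertex, over the rational normal curve that is the image of the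
standard one under `g`. The factor `c` is needed because not every element of `k` has to be an
`n`-th power. -/
def rncCone (g : (Fin (n + 1) → k) ≃ₗ[k] (Fin (n + 1) → k)) : Set (Fin (n + 1) → k) :=
  {x | ∃ u : Fin 2 → k, u ≠ 0 ∧ ∃ c : k, c ≠ 0 ∧ x = c • g (stdRNCvec k n (u 0) (u 1))}

variable {g : (Fin (n + 1) → k) ≃ₗ[k] (Fin (n + 1) → k)}

theorem rep_mem_rncCone {p : ProjSpace k n} {s t : k} (hst : s ≠ 0 ∨ t ≠ 0)
    (hp : p.submodule = Submodule.span k {g (stdRNCvec k n s t)}) : p.rep ∈ rncCone g := by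
  obtain ⟨c, hc⟩ : ∃ c : k, c • g (stdRNCvec k n s t) = p.rep := by
    rw [← Submodule.mem_span_singleton, ← hp, p.submodule_eq]
    exact Submodule.mem_span_singleton_self _
  refine ⟨![s, t], by simpa [imp_iff_not_or] using hst, c, ?_, hc.symm⟩
  rintro rfl
  exact p.rep_nonzero (by simpa using hc.symm)

theorem mul_sub_mul_ne_zero_of_linearIndependent {u u' : Fin 2 → k} {c c' : k} (hu : u ≠ 0)
    (hc : c ≠ 0)
    (h : LinearIndependent k
      ![c • g (stdRNCvec k n (u 0) (u 1)), c' • g (stdRNCvec k n (u' 0) (u' 1))]) :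
    u 0 * u' 1 - u 1 * u' 0 ≠ 0 := by
  have parameters_independent : LinearIndependent k (Matrix.of ![u, u']).row := by
    refine (LinearIndependent.pair_iff' hu).mpr fun a ha => ?_
    subst ha
    refine (LinearIndependent.pair_iff' (h.ne_zero 0)).mp h (c' * a ^ n * c⁻¹) ?_
    simp [stdRNCvec_mul_mul, smul_smul, hc]
  have det_isUnit := (Matrix.isUnit_iff_isUnit_det _).mp
    (Matrix.linearIndependent_rows_iff_isUnit.mp parameters_independent)
  simpa [Matrix.det_fin_two] using det_isUnit.ne_zero

theorem inGeneralPosition_of_mem_rncCone {ι : Type*} {v : ι → Fin (n + 1) → k}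
    (hv : ∀ p, v p ∈ rncCone g)
    (independent : Pairwise fun p q => LinearIndependent k ![v p, v q]) :
    InGeneralPosition k v := by
  intro T hT
  choose u hu c hc v_eq using hv
  let e : Fin (n + 1) ≃ T := (T.equivFinOfCardEq (by simpa using hT)).symm
  have curve_independent :
      LinearIndependent k fun i => stdRNCvec k n (u (e i) 0) (u (e i) 1) := by
    refine linearIndependent_stdRNCvec fun i j hij => ?_
    refine mul_sub_mul_ne_zero_of_linearIndependent (g := g) (n := n) (hu _) (hc (e i))
      (c' := c (e j)) ?_
    rw [← v_eq, ← v_eq]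
    exact independent fun h => hij.ne (e.injective (Subtype.ext h))
  have cone_independent : LinearIndependent k fun i => v (e i) := by
    simp only [v_eq]
    exact (curve_independent.map' g.toLinearMap g.ker).units_smul fun i => .mk0 (c (e i)) (hc _)
  exact (linearIndependent_equiv e).mp cone_independent

/-- The `i`-th coordinate of the parametrization of the standard rational normal curve, as a binary
form of degree `n`. -/
noncomputable def curveMonomial (k : Type*) [Field k] (n : ℕ) (i : Fin (n + 1)) :
    MvPolynomial (Fin 2) k :=
  X 0 ^ (n - (i : ℕ)) * X 1 ^ (i : ℕ)

theorem isHomogeneous_curveMonomial (i : Fin (n + 1)) :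
    (curveMonomial k n i).IsHomogeneous n := by
  simpa [curveMonomial, Nat.sub_add_cancel i.is_le] using
    (isHomogeneous_X_pow (R := k) (0 : Fin 2) (n - i)).mul (isHomogeneous_X_pow 1 i)

theorem eval_curveMonomial (u : Fin 2 → k) (i : Fin (n + 1)) :
    eval u (curveMonomial k n i) = stdRNCvec k n (u 0) (u 1) i := by
  simp [curveMonomial, stdRNCvec]

theorem dotProduct_gradient_curveMonomial (x u : Fin 2 → k) (i : Fin (n + 1)) :
    x ⬝ᵥ gradient (curveMonomial k n i) u =
      x 0 * (u 1 ^ (i : ℕ) * ((n - i : ℕ) * u 0 ^ (n - i - 1 : ℕ))) +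
        x 1 * (u 0 ^ (n - i : ℕ) * (i * u 1 ^ (i - 1 : ℕ))) := by
  simp [curveMonomial, gradient, dotProduct, Fin.sum_univ_two, pderiv_X]

theorem eq_zero_of_dotProduct_gradient_curveMonomial [CharZero k] (hn : n ≠ 0) {u : Fin 2 → k}
    (hu : u ≠ 0) {x : Fin 2 → k} (hx : ∀ i, x ⬝ᵥ gradient (curveMonomial k n i) u = 0) :
    x = 0 := by
  simp only [dotProduct_gradient_curveMonomial] at hx
  by_cases hs : u 0 = 0
  · have ht : u 1 ≠ 0 := fun ht => hu (by ext i; fin_cases i <;> assumption)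
    have hx1 : x 1 = 0 := by simpa [hn, ht] using hx (Fin.last n)
    have hx0 : x 0 = 0 := by
      simpa [hx1, ht, Nat.sub_sub_self (Nat.one_le_iff_ne_zero.mpr hn)]
        using hx ⟨n - 1, by omega⟩
    ext i; fin_cases i <;> assumption
  · have hx0 : x 0 = 0 := by simpa [hn, hs] using hx 0
    have hx1 : x 1 = 0 := by simpa [hx0, hs] using hx ⟨1, by omega⟩
    ext i; fin_cases i <;> assumption

theorem card_le_of_surjective_gradientMap_of_mem_rncCone [CharZero k] {ι : Type*} [Fintype ι]
    {d : ℕ} (hn : n ≠ 0) {v : ι → Fin (n + 1) → k} (hv : ∀ p, v p ∈ rncCone g)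
    (h : Function.Surjective (gradientMap d v)) : 2 * Fintype.card ι ≤ n * d + 1 := by
  choose u hu c hc v_eq using hv
  have on_cone : Function.Surjective
      (gradientMap d fun p => g (stdRNCvec k n (u p 0) (u p 1))) := by
    refine surjective_gradientMap_of_smul hc ?_
    rwa [← funext v_eq]
  have on_stdCone : Function.Surjective
      (gradientMap (1 * d) fun p => stdRNCvec k n (u p 0) (u p 1)) := by
    let γ (j : Fin (n + 1)) := linearForm (LinearMap.proj j ∘ₗ g.toLinearMap)
    refine surjective_gradientMap_of_bind₁ (γ := γ) (fun j => isHomogeneous_linearForm _)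
      (fun p x hx => g.map_eq_zero_iff.mp (funext fun j => ?_)) ?_
    · simpa [γ, dotProduct_gradient_linearForm] using hx j
    · simpa [γ, eval_linearForm] using on_cone
  have on_line : Function.Surjective (gradientMap (n * (1 * d)) u) :=
    surjective_gradientMap_of_bind₁ isHomogeneous_curveMonomial
      (fun p x => eq_zero_of_dotProduct_gradient_curveMonomial hn (hu p))
      (by simpa only [eval_curveMonomial] using on_stdCone)
  simpa [mul_comm] using card_mul_card_le_of_surjective_gradientMap on_line

end RationalNormalCurve

section HankelEquations

theorem isHomogeneous_det {R σ m : Type*} [CommRing R] [Fintype m] [DecidableEq m]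
    {M : Matrix m m (MvPolynomial σ R)} {e : ℕ} (hM : ∀ i j, (M i j).IsHomogeneous e) :
    M.det.IsHomogeneous (Fintype.card m * e) := by
  rw [Matrix.det_apply]
  refine IsHomogeneous.sum _ _ _ fun π _ => ?_
  have term := IsHomogeneous.prod univ (fun i => M (π i) i) (fun _ => e) fun i _ => hM _ _
  rw [sum_const, card_univ, smul_eq_mul] at term
  exact (homogeneousSubmodule σ R _).smul_of_tower_mem _ term

theorem eval_det_eq_zero_of_eval_eq_mul {R σ m : Type*} [CommRing R] [Fintype m] [DecidableEq m]
    [Nontrivial m] {M : Matrix m m (MvPolynomial σ R)} {v : σ → R} {a b : m → R}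
    (h : ∀ i j, eval v (M i j) = a i * b j) : eval v M.det = 0 := by
  rw [RingHom.map_det, ← Matrix.det_vecMulVec a b]
  congr 1
  ext i j
  exact h i j

theorem gradient_det_eq_zero_of_eval_eq_mul {R σ : Type*} [CommRing R]
    {M : Matrix (Fin 3) (Fin 3) (MvPolynomial σ R)} {v : σ → R} {a b : Fin 3 → R}
    (h : ∀ i j, eval v (M i j) = a i * b j) : gradient M.det v = 0 := by
  ext l
  simp only [gradient, Matrix.det_fin_three, map_add, map_sub, map_mul, pderiv_mul, h,
    Pi.zero_apply]
  ring

variable {k : Type*} [Field k] {n m : ℕ} (g : (Fin (n + 1) → k) ≃ₗ[k] (Fin (n + 1) → k))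
  (hm : 2 * m ≤ n)

/-- The Hankel matrix `(y_{i+j})` of the linear forms `y_i` that are the coordinates of `k^(n+1)`
transported by `g`; it has rank one along the image under `g` of the standard rational normal
curve. -/
noncomputable def hankel : Matrix (Fin (m + 1)) (Fin (m + 1)) (MvPolynomial (Fin (n + 1)) k) :=
  Matrix.of fun i j => linearForm (LinearMap.proj ⟨i + j, by omega⟩ ∘ₗ g.symm.toLinearMap)

theorem isHomogeneous_det_hankel : (hankel g hm).det.IsHomogeneous (m + 1) := by
  simpa using isHomogeneous_det (M := hankel g hm) fun i j => isHomogeneous_linearForm _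

theorem eval_hankel (x : Fin (n + 1) → k) (i j : Fin (m + 1)) :
    eval x (hankel g hm i j) = g.symm x ⟨i + j, by omega⟩ :=
  eval_linearForm _ x

variable {g} in
theorem exists_eval_hankel_eq_mul {x : Fin (n + 1) → k} (hx : x ∈ rncCone g) :
    ∃ a b : Fin (m + 1) → k, ∀ i j, eval x (hankel g hm i j) = a i * b j := by
  obtain ⟨u, -, c, -, rfl⟩ := hx
  refine ⟨fun i => c * u 0 ^ (n - 2 * m) * u 0 ^ (m - i : ℕ) * u 1 ^ (i : ℕ),
    fun j => u 0 ^ (m - j : ℕ) * u 1 ^ (j : ℕ), fun i j => ?_⟩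
  have exponent : n - (i + j : ℕ) = n - 2 * m + (m - i) + (m - j) := by omega
  simp only [eval_hankel, map_smul, g.symm_apply_apply, Pi.smul_apply, stdRNCvec, exponent,
    smul_eq_mul]
  ring

theorem det_hankel_ne_zero : (hankel g hm).det ≠ 0 := by
  let v : Fin (n + 1) → k := g (Pi.single ⟨m, by omega⟩ 1)
  have antidiagonal :
      (eval v).mapMatrix (hankel g hm) = (Fin.revPerm (n := m + 1)).permMatrix k := by
    ext i j
    simp only [RingHom.mapMatrix_apply, Matrix.map_apply, eval_hankel, v, g.symm_apply_apply,
      Pi.single_apply, Equiv.Perm.permMatrix, PEquiv.toMatrix_apply, Equiv.toPEquiv_apply,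
      Option.mem_some_iff, Fin.revPerm_apply, Fin.ext_iff, Fin.val_rev]
    exact if_congr (by omega) rfl rfl
  refine ne_zero_of_map (f := eval v) ?_
  rw [RingHom.map_det, antidiagonal, Matrix.det_permutation]
  exact ((Equiv.Perm.sign Fin.revPerm).map (Int.castRingHom k).toMonoidHom).ne_zero

end HankelEquations

section PointsOnRationalNormalCurve

variable {k : Type*} [Field k] {n d : ℕ} {g : (Fin (n + 1) → k) ≃ₗ[k] (Fin (n + 1) → k)}
  {S : Finset (ProjSpace k n)} (hS : ∀ p ∈ S, p.rep ∈ rncCone g)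
include hS

theorem h0_pos_of_four_le (hn : 2 ≤ n) (hd : 4 ≤ d) : 0 < h0 k n d S := by
  let Q := (hankel g (m := 1) hn).det
  have homogeneous : (X 0 ^ (d - 4) * Q ^ 2).IsHomogeneous d := by
    convert (isHomogeneous_X_pow 0 (d - 4)).mul
      ((isHomogeneous_det_hankel g (m := 1) hn).pow 2) using 1
    omega
  refine h0_pos homogeneous ?_ fun p hp => mem_doubleVanishing_of_mem_ker_sq ?_
  · exact mul_ne_zero (pow_ne_zero _ (X_ne_zero _)) (pow_ne_zero _ (det_hankel_ne_zero g hn))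
  · obtain ⟨a, b, rank_one⟩ := exists_eval_hankel_eq_mul (m := 1) hn (hS p hp)
    exact Ideal.mul_mem_left _ _
      (Ideal.pow_mem_pow (eval_det_eq_zero_of_eval_eq_mul rank_one) 2)

theorem h0_three_pos (hn : 4 ≤ n) : 0 < h0 k n 3 S := by
  refine h0_pos (isHomogeneous_det_hankel g (m := 2) hn) (det_hankel_ne_zero g hn) fun p hp => ?_
  obtain ⟨a, b, rank_one⟩ := exists_eval_hankel_eq_mul (m := 2) hn (hS p hp)
  exact mem_doubleVanishing_iff.mpr ⟨eval_det_eq_zero_of_eval_eq_mul rank_one,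
    gradient_det_eq_zero_of_eval_eq_mul rank_one⟩

theorem inGeneralPosition_reps : InGeneralPosition k (reps S) := by
  refine inGeneralPosition_of_mem_rncCone (fun p => hS p.1 p.2) fun p q hpq => ?_
  have rep_comp : Projectivization.rep ∘ ![p.1, q.1] = ![reps S p, reps S q] := by
    ext i : 1
    fin_cases i <;> rfl
  beta_reduce
  rw [← rep_comp, ← Projectivization.independent_iff, Projectivization.independent_pair_iff_ne]
  exact Subtype.coe_ne_coe.mpr hpq

theorem spans_of_succ_le_card (hcard : n + 1 ≤ #S) : Spans k n S := by
  have := (inGeneralPosition_reps hS).span_range (by simpa using hcard)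
  rwa [Spans, Set.image_eq_range]

variable [CharZero k]

theorem mem_terracini (hn : n ≠ 0) (hd : 2 ≤ d) (h0_pos : 0 < h0 k n d S)
    (hcard : n * d + 1 < 2 * #S) : S ∈ Terracini k n d #S := by
  have := Nat.mul_le_mul_left n hd
  refine ⟨rfl, spans_of_succ_le_card hS (by omega), h0_pos, ?_⟩
  rw [h1_pos_iff S (by omega)]
  intro surjective
  have := card_le_of_surjective_gradientMap_of_mem_rncCone hn (fun p : S => hS p.1 p.2) surjective
  rw [Fintype.card_coe] at this
  omega

theorem h1_eq_zero_of_ssubset (hd : 3 ≤ d) (le_card : n + 2 ≤ #S) (card_le : 2 * #S ≤ n * d + 3)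
    {A : Finset (ProjSpace k n)} (hA : A ⊂ S) : h1 k n d A = 0 := by
  classical
  obtain ⟨q, hqS, hqA⟩ := exists_of_ssubset hA
  have subset_erase : A ⊆ S.erase q := subset_erase.mpr ⟨hA.subset, hqA⟩
  have card_erase : Fintype.card (S.erase q) + 1 = #S := by
    rw [Fintype.card_coe, card_erase_add_one hqS]
  refine h1_eq_zero_of_subset (by omega) subset_erase ((h1_eq_zero_iff _ (by omega)).mpr ?_)
  exact (inGeneralPosition_reps fun p hp => hS p (mem_of_mem_erase hp)).surjective_gradientMap
    (by omega) hd (by omega)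

end PointsOnRationalNormalCurve

end Terracini

theorem rnc_points_terracini_general {k : Type*} [Field k] [CharZero k] {n d : ℕ}
    {C : Set (ProjSpace k n)} (hC : IsRNC k n C) {S : Finset (ProjSpace k n)} (hS : ↑S ⊆ C) :
    (2 ≤ n → 4 ≤ d → 1 + (n * d + 1) / 2 ≤ S.card → S ∈ Terracini k n d S.card) ∧
    (4 ≤ n → 1 + (3 * n + 1) / 2 ≤ S.card → S ∈ Terracini k n 3 S.card) ∧
    (2 ≤ n → 4 ≤ d → S.card = 1 + (n * d + 1) / 2 → S ∈ minTerracini k n d S.card) := by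
  obtain ⟨g, rfl⟩ := hC
  have on_cone (p) (hp : p ∈ S) : p.rep ∈ Terracini.rncCone g := by
    obtain ⟨s, t, hst, hp⟩ := hS hp
    exact Terracini.rep_mem_rncCone hst hp
  have mem_of_four_le (hn : 2 ≤ n) (hd : 4 ≤ d) (hcard : 1 + (n * d + 1) / 2 ≤ S.card) :
      S ∈ Terracini k n d S.card :=
    Terracini.mem_terracini on_cone (by omega) (by omega)
      (Terracini.h0_pos_of_four_le on_cone hn hd) (by omega)
  refine ⟨mem_of_four_le, fun hn hcard => ?_, fun hn hd hcard => ?_⟩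
  · exact Terracini.mem_terracini on_cone (by omega) (by omega)
      (Terracini.h0_three_pos on_cone hn) (by omega)
  · have := Nat.mul_le_mul_left n hd
    exact ⟨mem_of_four_le hn hd hcard.ge, fun A hA =>
      Terracini.h1_eq_zero_of_ssubset on_cone (by omega) (by omega) (by omega) hA⟩

/-- Theorem: points on a rational normal curve `C ⊂ P^n` are Terracini / minimally
Terracini in the stated ranges:
(i) `n ≥ 3`, `d ≥ 4`, `x ≥ 1 + ⌈nd/2⌉` gives `S ∈ T(n,d;x)`;
(ii) `n ≥ 4`, `d = 3`, `x = 1 + ⌈3n/2⌉` gives `S ∈ T(n,3;x)`;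
(iii) `n ≥ 2`, `d ≥ 4`, `x = 1 + ⌈nd/2⌉` gives `S ∈ T(n,d;x)'`. -/
theorem rnc_points_terracini
    (k : Type*) [Field k] [IsAlgClosed k] [CharZero k]
    (n d x : ℕ)
    (C : Set (ProjSpace k n)) (hC : IsRNC k n C)
    (S : Finset (ProjSpace k n)) (hS : ↑S ⊆ C) (hcard : S.card = x) :
    (3 ≤ n → 4 ≤ d → 1 + (n * d + 1) / 2 ≤ x → S ∈ Terracini k n d x) ∧
    (4 ≤ n → d = 3 → x = 1 + (3 * n + 1) / 2 → S ∈ Terracini k n 3 x) ∧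
    (2 ≤ n → 4 ≤ d → x = 1 + (n * d + 1) / 2 → S ∈ minTerracini k n d x) := by
  subst hcard
  have ⟨terracini, terracini_cubic, minimal⟩ := rnc_points_terracini_general (d := d) hC hS
  exact ⟨fun hn => terracini (by omega), fun hn _ hx => terracini_cubic hn hx.ge, minimal⟩
end

section
/- Fix integers n ≥ 2 and d ≥ 4. Let T ⊂ P^n be a reducible rational normal curve and let S be a set of x points with S ⊂ T_reg (the smooth locus of T) and S spanning P^n. If 2x ≥ dn + 2, then S ∈ T(n,d;x). -/
open MvPolynomial

/-- Data for a reducible rational normal curve in `P^n`: a union of `s ≥ 2` irreducible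
components, the `i`-th being a rational normal curve of degree `deg i` embedded in its
linear span via an injective linear map `emb i`. -/
structure RedRNC (k : Type*) [Field k] (n : ℕ) where
  s : ℕ
  two_le_s : 2 ≤ s
  deg : Fin s → ℕ
  deg_pos : ∀ i, 0 < deg i
  sum_deg : ∑ i, deg i = n
  emb : ∀ i, (Fin (deg i + 1) → k) →ₗ[k] (Fin (n+1) → k)
  emb_inj : ∀ i, Function.Injective (emb i)

namespace RedRNC

variable {k : Type*} [Field k] {n : ℕ}

/-- The `i`-th irreducible component: a rational normal curve in its linear span. -/
def comp (T : RedRNC k n) (i : Fin T.s) : Set (ProjSpace k n) :=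
  Projectivization.map (T.emb i) (T.emb_inj i) '' stdRNC k (T.deg i)

/-- The underlying reduced curve: the union of the components. -/
def curve (T : RedRNC k n) : Set (ProjSpace k n) := ⋃ i, T.comp i

/-- `T` is a genuine reducible rational normal curve: the components are pairwise distinct
(the curve is reduced and reducible of degree `n`), the curve is connected, and it spans
`P^n`. -/
def IsGood (T : RedRNC k n) : Prop :=
  (∀ i j, i ≠ j → T.comp i ≠ T.comp j) ∧
  (∀ I : Finset (Fin T.s), I.Nonempty → I ≠ Finset.univ →
    ∃ i ∈ I, ∃ j ∉ I, (T.comp i ∩ T.comp j).Nonempty) ∧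
  Submodule.span k (Projectivization.rep '' T.curve) = ⊤

/-- The singular locus of the curve: the points lying on at least two components. -/
def sing (T : RedRNC k n) : Set (ProjSpace k n) :=
  {p | ∃ i j, i ≠ j ∧ p ∈ T.comp i ∧ p ∈ T.comp j}

/-- The smooth locus of the curve. -/
def reg (T : RedRNC k n) : Set (ProjSpace k n) := T.curve \ T.sing

/-- A final component: an irreducible component containing exactly one singular point. -/
def Final (T : RedRNC k n) (i : Fin T.s) : Prop :=
  (T.comp i ∩ T.sing).ncard = 1

end RedRNC

/-!
Let `V_d` be the space of forms of degree `d` vanishing on `T`. Adding the components of `T` one at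
a time, each meeting the union of the previous ones, the first imposes at most `d * deg + 1`
conditions on forms of degree `d` and every later one at most `d * deg`, because the restricted
binary form already has a zero. Hence `V_d` has codimension at most `d * n + 1`.

For `d = 2` this is less than `(n + 2).choose n`, so `T` lies on a quadric `Q`, and `Q ^ 2` times
any form of degree `d - 4` is singular along `S`: this gives `h0 > 0`.

For `h1`, the differential at `p ∈ S` of a form in `V_d` kills `p`, by Euler's identity, and a
tangent direction of `T` at `p`. So the double point at `p` imposes at most `n - 1` conditions on
`V_d` instead of `n + 1`, and `h1 ≥ 2 * #S - (d * n + 1) > 0`.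
-/

section LinearConditions

open Module

variable {K V V' : Type*} [Field K] [AddCommGroup V] [Module K V] [AddCommGroup V'] [Module K V']

theorem finrank_map_add_finrank_inf_ker (U : Submodule K V) [FiniteDimensional K U]
    (f : V →ₗ[K] V') :
    finrank K (U.map f) + finrank K ↥(U ⊓ LinearMap.ker f) = finrank K U := by
  rw [← LinearMap.finrank_range_add_finrank_ker (f.domRestrict U), LinearMap.range_domRestrict,
    LinearMap.ker_domRestrict, ← Submodule.map_comap_subtype, Submodule.finrank_map_subtype_eq]

theorem finrank_le_finrank_inf_iInf_ker_add {ι : Type*} (U : Submodule K V)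
    [FiniteDimensional K U] (f : ι → V →ₗ[K] V') {c : ℕ} (S : Finset ι)
    (hf : ∀ p ∈ S, finrank K (U.map (f p)) ≤ c) :
    finrank K U ≤ finrank K ↥(U ⊓ ⨅ p ∈ S, LinearMap.ker (f p)) + S.card * c := by
  classical
  induction S using Finset.induction_on with
  | empty => exact (Submodule.finrank_mono (le_inf le_rfl (by simp))).trans (Nat.le_add_right _ _)
  | insert p S hp ih =>
    set U' := U ⊓ ⨅ q ∈ S, LinearMap.ker (f q)
    have hU' : finrank K U ≤ finrank K U' + S.card * c :=
      ih fun q hq => hf q (Finset.mem_insert_of_mem hq)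
    have hmap : finrank K (U'.map (f p)) ≤ c :=
      (Submodule.finrank_mono (Submodule.map_mono inf_le_left)).trans
        (hf p (Finset.mem_insert_self p S))
    have hinsert : U ⊓ ⨅ q ∈ insert p S, LinearMap.ker (f q) = U' ⊓ LinearMap.ker (f p) := by
      rw [Finset.iInf_insert, inf_comm (LinearMap.ker (f p)), inf_assoc]
    have hranknullity := finrank_map_add_finrank_inf_ker U' (f p)
    rw [hinsert, Finset.card_insert_of_notMem hp, add_one_mul]
    omega

theorem finrank_dualAnnihilator_span_pair_add_two [FiniteDimensional K V] {v w : V}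
    (h : LinearIndependent K ![v, w]) :
    finrank K (Submodule.span K {v, w}).dualAnnihilator + 2 = finrank K V := by
  have hspan : finrank K (Submodule.span K {v, w}) = 2 := by
    rw [← Matrix.range_cons_cons_empty v w ![], finrank_span_eq_card h, Fintype.card_fin]
  rw [← Subspace.finrank_add_finrank_dualAnnihilator_eq (Submodule.span K {v, w}), hspan, add_comm]

end LinearConditions

theorem finset_univ_of_exists_insert {ι : Type*} [Fintype ι] [DecidableEq ι]
    {P : Finset ι → Prop} {I₀ : Finset ι} (h₀ : P I₀)
    (hstep : ∀ I, I₀ ⊆ I → I ≠ Finset.univ → P I → ∃ j ∉ I, P (insert j I)) :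
    P Finset.univ := by
  obtain ⟨I, ⟨hI, hPI⟩, hmax⟩ :=
    (Set.toFinite {I | I₀ ⊆ I ∧ P I}).exists_maximal ⟨I₀, subset_rfl, h₀⟩
  by_cases hne : I = Finset.univ
  · exact hne ▸ hPI
  · obtain ⟨j, hj, hPj⟩ := hstep I hI hne hPI
    have hsub := Finset.subset_insert j I
    exact absurd (hmax ⟨hI.trans hsub, hPj⟩ hsub (Finset.mem_insert_self j I)) hj

section HomogeneousForms

variable {σ τ R : Type*} [CommSemiring R]

theorem finrank_homogeneousSubmodule [Fintype σ] [Nontrivial R] (d : ℕ) :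
    Module.finrank R (homogeneousSubmodule σ R d) = (Fintype.card σ + d - 1).choose d := by
  classical
  have hmonomials : {f : σ →₀ ℕ | f.degree = d} =
      ((Finset.univ : Finset σ).finsuppAntidiag d : Set (σ →₀ ℕ)) := by
    ext f
    simp [Finset.mem_finsuppAntidiag, Finsupp.degree_eq_sum]
  rw [homogeneousSubmodule_eq_finsupp_supported, hmonomials]
  refine (AddMonoidAlgebra.supportedEquivFinsupp _).finrank_eq.trans ?_
  simp only [Module.finrank_finsupp_self, Finset.coe_sort_coe, Fintype.card_coe,
    Finset.card_finsuppAntidiag_nat_eq_choose, Finset.card_univ]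

theorem finrank_homogeneousSubmodule_fin_succ [Nontrivial R] (n d : ℕ) :
    Module.finrank R (homogeneousSubmodule (Fin (n + 1)) R d) = (n + d).choose n := by
  rw [finrank_homogeneousSubmodule, Fintype.card_fin, Nat.choose_symm_add]
  congr 1
  omega

instance finite_homogeneousSubmodule [Finite σ] (d : ℕ) :
    Module.Finite R (homogeneousSubmodule σ R d) :=
  Module.Finite.iff_fg.mpr (homogeneousSubmodule_fg σ R d)

theorem eval_smul_of_isHomogeneous {F : MvPolynomial σ R} {d : ℕ} (hF : F.IsHomogeneous d)
    (c : R) (v : σ → R) : eval (c • v) F = c ^ d * eval v F := by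
  rw [eval_eq, eval_eq, Finset.mul_sum]
  refine Finset.sum_congr rfl fun e he => ?_
  have hdeg : ∑ i ∈ e.support, e i = d := by
    rw [← Finsupp.degree_apply, Finsupp.degree_eq_weight_one]
    exact hF (mem_support_iff.mp he)
  simp only [Pi.smul_apply, smul_eq_mul, mul_pow, Finset.prod_mul_distrib,
    Finset.prod_pow_eq_pow_sum, hdeg]
  ring

theorem eval_units_smul_eq_zero_iff {F : MvPolynomial σ R} {d : ℕ} (hF : F.IsHomogeneous d)
    (c : Rˣ) (v : σ → R) : eval (c • v) F = 0 ↔ eval v F = 0 := by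
  rw [Units.smul_def, eval_smul_of_isHomogeneous hF, ← Units.val_pow_eq_pow_val,
    Units.mul_right_eq_zero]

theorem eval_bind₁ (g : σ → MvPolynomial τ R) (F : MvPolynomial σ R) (u : τ → R) :
    eval u (bind₁ g F) = eval (eval u ∘ g) F :=
  eval₂Hom_bind₁ (RingHom.id R) u g F

variable [Fintype σ]

theorem derivation_aeval {A M : Type*} [CommSemiring A] [Algebra R A] [AddCommMonoid M] [Module A M]
    [Module R M] (D : Derivation R A M) (g : σ → A) (F : MvPolynomial σ R) :
    D (aeval g F) = ∑ j, aeval g (pderiv j F) • D (g j) := by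
  classical
  induction F using MvPolynomial.induction_on with
  | C c => simp
  | add p q hp hq => simp only [map_add, hp, hq, add_smul, Finset.sum_add_distrib]
  | mul_X p i hp =>
    simp [Derivation.leibniz, hp, pderiv_X, add_smul, Finset.sum_add_distrib, Finset.smul_sum,
      Pi.single_apply, mul_smul, ite_smul, apply_ite]

/-- The differential of a polynomial at `v`, as a linear form on the ambient space; it sends `w` to
the derivative at `v` in the direction `w`. -/
noncomputable def differentialAt (v : σ → R) : MvPolynomial σ R →ₗ[R] Module.Dual R (σ → R) where
  toFun F := ∑ j, eval v (pderiv j F) • LinearMap.proj j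
  map_add' F G := by simp only [map_add, add_smul, Finset.sum_add_distrib]
  map_smul' c F := by simp [Finset.smul_sum, mul_smul]

theorem differentialAt_apply (v w : σ → R) (F : MvPolynomial σ R) :
    differentialAt v F w = ∑ j, eval v (pderiv j F) * w j := by
  simp [differentialAt]

theorem differentialAt_smul_of_isHomogeneous {F : MvPolynomial σ R} {d : ℕ}
    (hF : F.IsHomogeneous d) (c : R) (v : σ → R) :
    differentialAt (c • v) F = c ^ (d - 1) • differentialAt v F := by
  ext w
  simp [differentialAt_apply, eval_smul_of_isHomogeneous hF.pderiv, Finset.mul_sum, mul_assoc]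

theorem differentialAt_self_of_isHomogeneous {F : MvPolynomial σ R} {d : ℕ}
    (hF : F.IsHomogeneous d) (v : σ → R) : differentialAt v F v = d * eval v F := by
  simpa [differentialAt_apply, mul_comm] using congrArg (eval v) hF.sum_X_mul_pderiv

theorem differentialAt_eval_comp_apply_eval_pderiv (g : σ → MvPolynomial τ R)
    (F : MvPolynomial σ R) (u : τ → R) (a : τ) :
    differentialAt (eval u ∘ g) F (eval u ∘ pderiv a ∘ g) = eval u (pderiv a (bind₁ g F)) := by
  rw [← aeval_eq_bind₁, derivation_aeval]
  simp [differentialAt_apply, eval_bind₁]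

end HomogeneousForms

section DoublePoints

variable {k : Type*} [Field k]

theorem mem_doubleVanishing_iff {N : ℕ} {v : Fin N → k} {F : MvPolynomial (Fin N) k} :
    F ∈ doubleVanishing k v ↔ eval v F = 0 ∧ differentialAt v F = 0 := by
  have hpartials : differentialAt v F = 0 ↔ ∀ i, eval v (pderiv i F) = 0 := by
    refine ⟨fun h i => ?_, fun h => ?_⟩
    · simpa [differentialAt_apply, Pi.single_apply] using
        LinearMap.congr_fun h (Pi.single i 1)
    · ext i
      simp [differentialAt_apply, h]
  rw [hpartials]
  simp [doubleVanishing, evalLM, aeval_eq_eval]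

theorem sq_mul_mem_doubleVanishing {N : ℕ} {v : Fin N → k} {Q : MvPolynomial (Fin N) k}
    (hQ : eval v Q = 0) (G : MvPolynomial (Fin N) k) : Q ^ 2 * G ∈ doubleVanishing k v := by
  simp [doubleVanishing, evalLM, aeval_eq_eval, Derivation.leibniz, hQ]

theorem h0_pos_of_isHomogeneous_of_eval_rep_eq_zero {n d e : ℕ} (hed : 2 * e ≤ d)
    {Q : MvPolynomial (Fin (n + 1)) k} (hQ : Q.IsHomogeneous e) (hQ0 : Q ≠ 0)
    {S : Finset (ProjSpace k n)} (hS : ∀ p ∈ S, eval p.rep Q = 0) : 0 < h0 k n d S := by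
  have hhom : (Q ^ 2 * X 0 ^ (d - 2 * e)).IsHomogeneous d := by
    have hmul := (hQ.pow 2).mul (isHomogeneous_X_pow (R := k) (0 : Fin (n + 1)) (d - 2 * e))
    rwa [mul_comm e, Nat.add_sub_cancel' hed] at hmul
  have hdouble : Q ^ 2 * X 0 ^ (d - 2 * e) ∈ ⨅ p ∈ S, doubleVanishing k p.rep := by
    simp only [Submodule.mem_iInf]
    exact fun p hp => sq_mul_mem_doubleVanishing (hS p hp) _
  have hne : Q ^ 2 * X 0 ^ (d - 2 * e) ≠ 0 :=
    mul_ne_zero (pow_ne_zero 2 hQ0) (pow_ne_zero _ (X_ne_zero 0))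
  exact Module.finrank_pos_iff_exists_ne_zero.mpr
    ⟨⟨_, hhom, hdouble⟩, fun h => hne (congrArg Subtype.val h)⟩

end DoublePoints

section LinearImage

variable {R A ι κ : Type*} [CommSemiring R] [AddCommMonoid A] [Module R A] [Fintype ι]
  [DecidableEq ι]

/-- The image of a tuple `g` with entries in an `R`-module under the matrix of the linear map `E`,
that is, the base change of `E` applied to `g`. -/
def linearImage (E : (ι → R) →ₗ[R] (κ → R)) (g : ι → A) (j : κ) : A :=
  ∑ l, E (Pi.single l 1) j • g l

theorem comp_linearImage (E : (ι → R) →ₗ[R] (κ → R)) (g : ι → A) (L : A →ₗ[R] R) :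
    L ∘ linearImage E g = E (L ∘ g) := by
  ext j
  have hexpand : L ∘ g = ∑ l, L (g l) • Pi.single (M := fun _ => R) l 1 := by
    ext l
    simp [Pi.single_apply]
  rw [hexpand]
  simp [linearImage, mul_comm]

end LinearImage

section StandardRationalNormalCurve

variable {k : Type*} [Field k]

/-- The tuple of binary forms `X₀^(m-l) X₁^l`, which parametrizes the standard rational normal
curve of degree `m`. -/
noncomputable def rncForm (k : Type*) [Field k] (m : ℕ) (l : Fin (m + 1)) :
    MvPolynomial (Fin 2) k :=
  X 0 ^ (m - (l : ℕ)) * X 1 ^ (l : ℕ)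

theorem isHomogeneous_rncForm (m : ℕ) (l : Fin (m + 1)) : (rncForm k m l).IsHomogeneous m := by
  have hmul := (isHomogeneous_X_pow (R := k) (0 : Fin 2) (m - (l : ℕ))).mul
    (isHomogeneous_X_pow (R := k) (1 : Fin 2) (l : ℕ))
  rwa [Nat.sub_add_cancel (Nat.le_of_lt_succ l.2)] at hmul

theorem eval_comp_rncForm (m : ℕ) (u : Fin 2 → k) :
    eval u ∘ rncForm k m = stdRNCvec k m (u 0) (u 1) := by
  ext l
  simp [rncForm, stdRNCvec]

theorem exists_linearIndependent_rncForm_pderiv {m : ℕ} (hm : 0 < m) {u : Fin 2 → k}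
    (hu : u ≠ 0) : ∃ a : Fin 2,
      LinearIndependent k ![eval u ∘ rncForm k m, eval u ∘ pderiv a ∘ rncForm k m] := by
  obtain hu₀ | hu₁ : u 0 ≠ 0 ∨ u 1 ≠ 0 := Fin.exists_fin_two.mp (Function.ne_iff.mp hu)
  -- The partial derivative transverse to a nonzero coordinate of `u` has leading entries `0` and
  -- `u 0 ^ (m - 1)` (or the mirror image), which makes the independence characteristic-free.
  · refine ⟨1, LinearIndependent.pair_iff.mpr fun α β h => ?_⟩
    have hα : α = 0 := by
      simpa [rncForm, hu₀, pderiv_X] using congrFun h ⟨0, by omega⟩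
    have hβ : β = 0 := by
      simpa [rncForm, hu₀, pderiv_X, hα] using congrFun h ⟨1, by omega⟩
    exact ⟨hα, hβ⟩
  · refine ⟨0, LinearIndependent.pair_iff.mpr fun α β h => ?_⟩
    have hα : α = 0 := by
      simpa [rncForm, hu₁, pderiv_X] using congrFun h ⟨m, by omega⟩
    have hβ : β = 0 := by
      simpa [rncForm, hu₁, pderiv_X, hα, Nat.sub_sub_self hm] using congrFun h ⟨m - 1, by omega⟩
    exact ⟨hα, hβ⟩

theorem finrank_binaryForms_inf_ker_eval_le {u : Fin 2 → k} (hu : u ≠ 0) (N : ℕ) :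
    Module.finrank k ↥(homogeneousSubmodule (Fin 2) k N ⊓ LinearMap.ker (evalLM k u)) ≤ N := by
  have hlt : homogeneousSubmodule (Fin 2) k N ⊓ LinearMap.ker (evalLM k u) <
      homogeneousSubmodule (Fin 2) k N := by
    obtain ⟨a, ha⟩ := Function.ne_iff.mp hu
    refine inf_lt_left.mpr fun hle => pow_ne_zero N ha ?_
    simpa [evalLM] using hle (isHomogeneous_X_pow a N)
  have hfinrank := Submodule.finrank_lt_finrank_of_lt hlt
  rw [finrank_homogeneousSubmodule_fin_succ 1, Nat.choose_one_right] at hfinrank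
  omega

end StandardRationalNormalCurve

namespace RedRNC

variable {k : Type*} [Field k] {n : ℕ}

theorem two_le (T : RedRNC k n) : 2 ≤ n :=
  calc 2 ≤ T.s := T.two_le_s
    _ = ∑ _i : Fin T.s, 1 := by simp
    _ ≤ ∑ i, T.deg i := Finset.sum_le_sum fun i _ => T.deg_pos i
    _ = n := T.sum_deg

variable (T : RedRNC k n)

/-- Connectedness of the curve: no proper nonempty subset of the components is disjoint from its
complement. -/
def IsConnected : Prop :=
  ∀ I : Finset (Fin T.s), I.Nonempty → I ≠ Finset.univ →
    ∃ i ∈ I, ∃ j ∉ I, (T.comp i ∩ T.comp j).Nonempty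

/-- The tuple of binary forms of degree `T.deg i` parametrizing the `i`-th component. -/
noncomputable def param (i : Fin T.s) : Fin (n + 1) → MvPolynomial (Fin 2) k :=
  linearImage (T.emb i) (rncForm k (T.deg i))

theorem isHomogeneous_param (i : Fin T.s) (j : Fin (n + 1)) :
    (T.param i j).IsHomogeneous (T.deg i) :=
  Submodule.sum_smul_mem (homogeneousSubmodule (Fin 2) k (T.deg i)) _
    fun l _ => isHomogeneous_rncForm (T.deg i) l

theorem eval_comp_param (i : Fin T.s) (u : Fin 2 → k) :
    eval u ∘ T.param i = T.emb i (eval u ∘ rncForm k (T.deg i)) :=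
  comp_linearImage (T.emb i) (rncForm k (T.deg i)) (aeval u).toLinearMap

theorem eval_comp_pderiv_comp_param (i : Fin T.s) (u : Fin 2 → k) (a : Fin 2) :
    eval u ∘ pderiv a ∘ T.param i = T.emb i (eval u ∘ pderiv a ∘ rncForm k (T.deg i)) :=
  comp_linearImage (T.emb i) (rncForm k (T.deg i))
    ((aeval u).toLinearMap ∘ₗ (pderiv a).toLinearMap)

theorem exists_linearIndependent_param_pderiv (i : Fin T.s) {u : Fin 2 → k} (hu : u ≠ 0) :
    ∃ a : Fin 2, LinearIndependent k ![eval u ∘ T.param i, eval u ∘ pderiv a ∘ T.param i] := by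
  obtain ⟨a, ha⟩ := exists_linearIndependent_rncForm_pderiv (T.deg_pos i) hu
  refine ⟨a, ?_⟩
  rw [eval_comp_param, eval_comp_pderiv_comp_param]
  simpa only [LinearIndependent.pair_iff, ← map_smul, ← map_add,
    map_eq_zero_iff (T.emb i) (T.emb_inj i)] using ha

variable {T}

theorem exists_rep_eq_smul_eval_param {i : Fin T.s} {p : ProjSpace k n} (hp : p ∈ T.comp i) :
    ∃ u : Fin 2 → k, u ≠ 0 ∧ ∃ c : kˣ, p.rep = c • (eval u ∘ T.param i) := by
  obtain ⟨q, ⟨s, t, hst, hq⟩, rfl⟩ := hp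
  set u : Fin 2 → k := ![s, t]
  have hu : u ≠ 0 := Function.ne_iff.mpr (Fin.exists_fin_two.mpr hst)
  obtain ⟨a, ha⟩ := exists_linearIndependent_rncForm_pderiv (T.deg_pos i) hu
  have hγ : eval u ∘ rncForm k (T.deg i) ≠ 0 := ha.ne_zero 0
  have hq_eq : q = Projectivization.mk k _ hγ := Projectivization.submodule_injective <| by
    rw [hq, Projectivization.submodule_mk, eval_comp_rncForm]
    rfl
  obtain ⟨c, hc⟩ := Projectivization.exists_smul_eq_mk_rep k (T.emb i _)
    ((map_ne_zero_iff _ (T.emb_inj i)).mpr hγ)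
  refine ⟨u, hu, c, ?_⟩
  rw [hq_eq, Projectivization.map_mk, ← hc, eval_comp_param]

variable (T)

/-- The forms of degree `d` vanishing identically on the components of `T` indexed by `I`. -/
noncomputable def vanishingForms (d : ℕ) (I : Finset (Fin T.s)) :
    Submodule k (MvPolynomial (Fin (n + 1)) k) :=
  homogeneousSubmodule (Fin (n + 1)) k d ⊓ ⨅ i ∈ I, LinearMap.ker (bind₁ (T.param i)).toLinearMap

instance finiteDimensional_vanishingForms (d : ℕ) (I : Finset (Fin T.s)) :
    FiniteDimensional k (T.vanishingForms d I) :=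
  Submodule.finiteDimensional_inf_left _ _

variable {T}

theorem mem_vanishingForms_iff {d : ℕ} {I : Finset (Fin T.s)} {F : MvPolynomial (Fin (n + 1)) k} :
    F ∈ T.vanishingForms d I ↔ F.IsHomogeneous d ∧ ∀ i ∈ I, bind₁ (T.param i) F = 0 := by
  simp [vanishingForms]

theorem eval_rep_eq_zero_of_mem_vanishingForms {d : ℕ} {I : Finset (Fin T.s)}
    {F : MvPolynomial (Fin (n + 1)) k} (hF : F ∈ T.vanishingForms d I) {i : Fin T.s} (hi : i ∈ I)
    {p : ProjSpace k n} (hp : p ∈ T.comp i) : eval p.rep F = 0 := by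
  obtain ⟨hFd, hFI⟩ := mem_vanishingForms_iff.mp hF
  obtain ⟨u, -, c, hrep⟩ := exists_rep_eq_smul_eval_param hp
  rw [hrep, eval_units_smul_eq_zero_iff hFd, ← eval_bind₁, hFI i hi, map_zero]

theorem finrank_vanishingForms_le_insert_add (d : ℕ) (I : Finset (Fin T.s)) (j : Fin T.s)
    {B : Submodule k (MvPolynomial (Fin 2) k)} [FiniteDimensional k B]
    (hB : ∀ F ∈ T.vanishingForms d I, bind₁ (T.param j) F ∈ B) :
    Module.finrank k (T.vanishingForms d I) ≤
      Module.finrank k (T.vanishingForms d (insert j I)) + Module.finrank k B := by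
  have hinsert : T.vanishingForms d (insert j I) =
      T.vanishingForms d I ⊓ LinearMap.ker (bind₁ (T.param j)).toLinearMap := by
    rw [vanishingForms, Finset.iInf_insert, inf_comm (LinearMap.ker _), ← inf_assoc, vanishingForms]
  have himage : Module.finrank k
      ((T.vanishingForms d I).map (bind₁ (T.param j)).toLinearMap) ≤ Module.finrank k B :=
    Submodule.finrank_mono (Submodule.map_le_iff_le_comap.mpr hB)
  have hranknullity := finrank_map_add_finrank_inf_ker (T.vanishingForms d I)
    (bind₁ (T.param j)).toLinearMap
  rw [hinsert]
  omega

theorem finrank_vanishingForms_le_insert_add_of_inter_nonempty (d : ℕ) {I : Finset (Fin T.s)}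
    {i j : Fin T.s} (hi : i ∈ I) (hij : (T.comp i ∩ T.comp j).Nonempty) :
    Module.finrank k (T.vanishingForms d I) ≤
      Module.finrank k (T.vanishingForms d (insert j I)) + d * T.deg j := by
  obtain ⟨p, hpi, hpj⟩ := hij
  obtain ⟨u, hu, c, hrep⟩ := exists_rep_eq_smul_eval_param hpj
  refine (finrank_vanishingForms_le_insert_add d I j fun F hF => ?_).trans
    (Nat.add_le_add_left (finrank_binaryForms_inf_ker_eval_le hu (d * T.deg j)) _)
  have hFd := (mem_vanishingForms_iff.mp hF).1
  have hFp := eval_rep_eq_zero_of_mem_vanishingForms hF hi hpi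
  rw [hrep, eval_units_smul_eq_zero_iff hFd, ← eval_bind₁] at hFp
  exact ⟨mul_comm d _ ▸ hFd.aeval _ (T.isHomogeneous_param j), hFp⟩

theorem choose_le_finrank_vanishingForms_singleton_add (d : ℕ) (i : Fin T.s) :
    (n + d).choose n ≤ Module.finrank k (T.vanishingForms d {i}) + (d * T.deg i + 1) := by
  have hempty : T.vanishingForms d ∅ = homogeneousSubmodule (Fin (n + 1)) k d := by
    simp [vanishingForms]
  have hle := finrank_vanishingForms_le_insert_add (T := T) d ∅ i
    (B := homogeneousSubmodule (Fin 2) k (T.deg i * d)) fun F hF =>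
      (mem_vanishingForms_iff.mp hF).1.aeval _ (T.isHomogeneous_param i)
  rwa [hempty, finrank_homogeneousSubmodule_fin_succ, finrank_homogeneousSubmodule_fin_succ 1,
    Nat.choose_one_right, insert_empty_eq, mul_comm (T.deg i), add_comm 1] at hle

theorem choose_le_finrank_vanishingForms_add (hT : T.IsConnected) (d : ℕ) :
    (n + d).choose n ≤ Module.finrank k (T.vanishingForms d Finset.univ) + (d * n + 1) := by
  have hs := T.two_le_s
  let i₀ : Fin T.s := ⟨0, by omega⟩
  have hunion : (n + d).choose n ≤ Module.finrank k (T.vanishingForms d Finset.univ) +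
      (d * ∑ i ∈ Finset.univ, T.deg i + 1) := by
    refine finset_univ_of_exists_insert (I₀ := {i₀}) (P := fun I => (n + d).choose n ≤
      Module.finrank k (T.vanishingForms d I) + (d * ∑ i ∈ I, T.deg i + 1)) ?_ ?_
    · rw [Finset.sum_singleton]
      exact choose_le_finrank_vanishingForms_singleton_add d i₀
    · intro I hI hne hle
      obtain ⟨i, hi, j, hj, hij⟩ := hT I ⟨i₀, Finset.singleton_subset_iff.mp hI⟩ hne
      refine ⟨j, hj, hle.trans ?_⟩
      have hinsert := finrank_vanishingForms_le_insert_add_of_inter_nonempty d hi hij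
      rw [Finset.sum_insert hj, mul_add]
      omega
  rwa [T.sum_deg] at hunion

theorem exists_quadric (hT : T.IsConnected) :
    ∃ Q ∈ T.vanishingForms 2 Finset.univ, Q ≠ 0 := by
  have hchoose : 2 * n + 1 < (n + 2).choose n := by
    have hn := T.two_le
    have hdouble := Nat.add_one_mul_choose_eq (n + 1) 1
    rw [Nat.choose_symm_add]
    simp only [Nat.choose_one_right] at hdouble
    nlinarith
  have hpos : 0 < Module.finrank k (T.vanishingForms 2 Finset.univ) := by
    have hcodim := choose_le_finrank_vanishingForms_add hT 2
    omega
  obtain ⟨⟨Q, hQ⟩, hQ0⟩ := Module.finrank_pos_iff_exists_ne_zero.mp hpos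
  exact ⟨Q, hQ, fun h => hQ0 (Subtype.ext h)⟩

theorem exists_linearIndependent_differentialAt_rep_eq_zero {i : Fin T.s} {p : ProjSpace k n}
    (hp : p ∈ T.comp i) : ∃ w, LinearIndependent k ![p.rep, w] ∧
      ∀ {d : ℕ} {I : Finset (Fin T.s)} {F}, i ∈ I → F ∈ T.vanishingForms d I →
        differentialAt p.rep F w = 0 := by
  obtain ⟨u, hu, c, hrep⟩ := exists_rep_eq_smul_eval_param hp
  obtain ⟨a, ha⟩ := T.exists_linearIndependent_param_pderiv i hu
  refine ⟨eval u ∘ pderiv a ∘ T.param i, ?_, fun {d I F} hi hF => ?_⟩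
  · rw [hrep]
    convert ha.units_smul ![c, 1] using 1
    ext b
    fin_cases b <;> simp
  · obtain ⟨hFd, hFI⟩ := mem_vanishingForms_iff.mp hF
    rw [hrep, Units.smul_def, differentialAt_smul_of_isHomogeneous hFd, LinearMap.smul_apply,
      differentialAt_eval_comp_apply_eval_pderiv, hFI i hi, map_zero, map_zero, smul_zero]

theorem finrank_map_differentialAt_rep_add_two_le (d : ℕ) {I : Finset (Fin T.s)} {i : Fin T.s}
    (hi : i ∈ I) {p : ProjSpace k n} (hp : p ∈ T.comp i) :
    Module.finrank k ((T.vanishingForms d I).map (differentialAt p.rep)) + 2 ≤ n + 1 := by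
  obtain ⟨w, hw, htangent⟩ := exists_linearIndependent_differentialAt_rep_eq_zero hp
  have hle : (T.vanishingForms d I).map (differentialAt p.rep) ≤
      (Submodule.span k {p.rep, w}).dualAnnihilator := by
    rintro _ ⟨F, hF, rfl⟩
    have heuler : differentialAt p.rep F p.rep = 0 := by
      rw [differentialAt_self_of_isHomogeneous (mem_vanishingForms_iff.mp hF).1,
        eval_rep_eq_zero_of_mem_vanishingForms hF hi hp, mul_zero]
    have hspan : Submodule.span k {p.rep, w} ≤ LinearMap.ker (differentialAt p.rep F) :=
      Submodule.span_le.mpr (Set.pair_subset heuler (htangent hi hF))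
    exact (Submodule.mem_dualAnnihilator _).mpr fun x hx => hspan hx
  have hrank := finrank_dualAnnihilator_span_pair_add_two hw
  rw [Module.finrank_fin_fun] at hrank
  exact (Nat.add_le_add_right (Submodule.finrank_mono hle) 2).trans hrank.le

theorem finrank_vanishingForms_add_two_mul_card_le (d : ℕ) {S : Finset (ProjSpace k n)}
    (hS : ↑S ⊆ T.curve) :
    Module.finrank k (T.vanishingForms d Finset.univ) + 2 * S.card ≤
      h0 k n d S + (n + 1) * S.card := by
  have hn := T.two_le
  have hcount := finrank_le_finrank_inf_iInf_ker_add (T.vanishingForms d Finset.univ)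
    (fun p : ProjSpace k n => differentialAt p.rep) (c := n - 1) S fun p hp => by
      obtain ⟨i, hi⟩ := Set.mem_iUnion.mp (hS hp)
      have hrank := finrank_map_differentialAt_rep_add_two_le d (Finset.mem_univ i) hi
      omega
  have hle : T.vanishingForms d Finset.univ ⊓
      ⨅ p ∈ S, LinearMap.ker (differentialAt p.rep) ≤
        homogeneousSubmodule (Fin (n + 1)) k d ⊓ ⨅ p ∈ S, doubleVanishing k p.rep := by
    refine le_inf (inf_le_left.trans inf_le_left) (le_iInf₂ fun p hp F hF => ?_)
    obtain ⟨i, hi⟩ := Set.mem_iUnion.mp (hS hp)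
    exact mem_doubleVanishing_iff.mpr
      ⟨eval_rep_eq_zero_of_mem_vanishingForms hF.1 (Finset.mem_univ i) hi,
        (Submodule.mem_iInf _).mp ((Submodule.mem_iInf _).mp hF.2 p) hp⟩
  have hh0 := Submodule.finrank_mono hle
  have hsplit : (n + 1) * S.card = S.card * (n - 1) + 2 * S.card := by
    obtain ⟨m, rfl⟩ := Nat.exists_eq_add_of_le' hn
    rw [Nat.add_sub_assoc (by norm_num)]
    ring
  unfold h0
  omega

theorem h0_pos (hT : T.IsConnected) {d : ℕ} (hd : 4 ≤ d) {S : Finset (ProjSpace k n)}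
    (hS : ↑S ⊆ T.curve) : 0 < h0 k n d S := by
  obtain ⟨Q, hQ, hQ0⟩ := exists_quadric hT
  refine h0_pos_of_isHomogeneous_of_eval_rep_eq_zero hd (mem_vanishingForms_iff.mp hQ).1 hQ0
    fun p hp => ?_
  obtain ⟨i, hi⟩ := Set.mem_iUnion.mp (hS hp)
  exact eval_rep_eq_zero_of_mem_vanishingForms hQ (Finset.mem_univ i) hi

theorem two_mul_card_le_h1_add (hT : T.IsConnected) (d : ℕ) {S : Finset (ProjSpace k n)}
    (hS : ↑S ⊆ T.curve) : (2 * S.card : ℤ) ≤ h1 k n d S + (d * n + 1) := by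
  have hcodim := choose_le_finrank_vanishingForms_add hT d
  have hcount := finrank_vanishingForms_add_two_mul_card_le d hS
  unfold h1
  zify at hcodim hcount
  linarith

end RedRNC

theorem redRNC_points_terracini_general {k : Type*} [Field k] {n d : ℕ} (hd : 4 ≤ d)
    {T : RedRNC k n} (hT : T.IsConnected) {S : Finset (ProjSpace k n)} (hS : ↑S ⊆ T.curve)
    (hspan : Spans k n S) (hx : d * n + 2 ≤ 2 * S.card) : S ∈ Terracini k n d S.card := by
  have hh1 := RedRNC.two_mul_card_le_h1_add hT d hS
  refine ⟨rfl, hspan, RedRNC.h0_pos hT hd hS, ?_⟩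
  zify at hx
  linarith

/-- Lemma: for `n ≥ 2`, `d ≥ 4`, a set `S` of `x` points contained in the smooth locus of
a reducible rational normal curve of `P^n`, spanning `P^n` and with `2x ≥ dn + 2`,
belongs to `T(n,d;x)`. -/
theorem redRNC_points_terracini
    (k : Type*) [Field k] [IsAlgClosed k] [CharZero k]
    (n d x : ℕ) (hn : 2 ≤ n) (hd : 4 ≤ d)
    (T : RedRNC k n) (hT : T.IsGood)
    (S : Finset (ProjSpace k n)) (hcard : S.card = x)
    (hreg : ↑S ⊆ T.reg) (hspan : Spans k n S)
    (hx : d * n + 2 ≤ 2 * x) :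
    S ∈ Terracini k n d x :=
  hcard ▸ redRNC_points_terracini_general hd hT.2.1 (hreg.trans Set.sdiff_subset) hspan (hcard ▸ hx)
end
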